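/- Let K be a commutative ℚ-algebra, let n ≥ 1 and k ≥ 0 be integers, and let x_1, …, x_n ∈ K with S = x_1 + ⋯ + x_n. Then the sum over all tuples (α_1, …, α_n) of non-negative integers with α_1 + ⋯ + α_n = k of the products ∏_{i=1}^n [x_i(x_i+1)⋯(x_i+α_i−1)/α_i!] equals S(S+1)⋯(S+k−1)/k!. (Here an empty product x_i(x_i+1)⋯(x_i+α_i−1) with α_i = 0 is 1.) -/

import Mathlib

/-! The products `x (x + 1) ⋯ (x + m - 1) / m!` are the coefficients of `(1 - T) ^ (-x)`, and
`(1 - T) ^ (-∑ x i) = ∏ (1 - T) ^ (-x i)`. Replacing `T` by `-T` turns this into the fact that the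
binomial series `(1 + T) ^ r` takes sums of exponents to products. -/

open Finset Polynomial

lemma powerSeries_coeff_prod_piAntidiag {R ι : Type*} [CommSemiring R] [DecidableEq ι]
    (s : Finset ι) (f : ι → PowerSeries R) (k : ℕ) :
    PowerSeries.coeff k (∏ i ∈ s, f i) =
      ∑ α ∈ s.piAntidiag k, ∏ i ∈ s, PowerSeries.coeff (α i) (f i) := by
  rw [PowerSeries.coeff_prod]
  refine sum_nbij (⇑) (fun α hα => ?_) DFunLike.coe_injective.injOn (fun α hα => ?_)
    fun _ _ => rfl
  · simpa [subset_iff] using hα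
  · obtain ⟨hsum, hsupp⟩ := mem_piAntidiag.1 hα
    exact ⟨Finsupp.onFinset s α hsupp, by simpa [subset_iff] using ⟨hsum, hsupp⟩, rfl⟩

section BinomialRing

variable {R ι : Type*} [CommRing R] [BinomialRing R]

lemma binomialSeries_sum {A : Type*} [CommRing A] [Algebra R A] (s : Finset ι) (r : ι → R) :
    PowerSeries.binomialSeries A (∑ i ∈ s, r i) =
      ∏ i ∈ s, PowerSeries.binomialSeries A (r i) := by
  classical
  induction s using Finset.induction_on with
  | empty => simp
  | insert a s ha ih => rw [sum_insert ha, prod_insert ha, PowerSeries.binomialSeries_add, ih]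

lemma choose_sum [DecidableEq ι] (s : Finset ι) (r : ι → R) (k : ℕ) :
    Ring.choose (∑ i ∈ s, r i) k =
      ∑ α ∈ s.piAntidiag k, ∏ i ∈ s, Ring.choose (r i) (α i) := by
  simpa [powerSeries_coeff_prod_piAntidiag] using
    congrArg (PowerSeries.coeff k) (binomialSeries_sum (A := R) s r)

lemma multichoose_eq_neg_one_pow_mul_choose_neg (r : R) (k : ℕ) :
    Ring.multichoose r k = (-1) ^ k * Ring.choose (-r) k := by
  rw [Ring.choose_neg', Units.smul_def, Int.coe_negOnePow_natCast, zsmul_eq_mul]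
  push_cast
  rw [← mul_assoc, ← mul_pow, neg_one_mul, neg_neg, one_pow, one_mul]

theorem stmt0_general [DecidableEq ι] (s : Finset ι) (x : ι → R) (k : ℕ) :
    ∑ α ∈ s.piAntidiag k, ∏ i ∈ s, Ring.multichoose (x i) (α i) =
      Ring.multichoose (∑ i ∈ s, x i) k := by
  simp only [multichoose_eq_neg_one_pow_mul_choose_neg, ← sum_neg_distrib, choose_sum, mul_sum,
    prod_mul_distrib, prod_pow_eq_pow_sum]
  refine sum_congr rfl fun α hα => ?_
  rw [(mem_piAntidiag.1 hα).1]

end BinomialRing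

lemma algebraMap_one_div_factorial_mul_ascPochhammer_eval {K : Type*} [Semiring K] [Algebra ℚ K]
    [BinomialRing K] (x : K) (m : ℕ) :
    algebraMap ℚ K (1 / (Nat.factorial m : ℚ)) * (ascPochhammer K m).eval x =
      Ring.multichoose x m := by
  have hm : (m.factorial : ℚ) ≠ 0 := Nat.cast_ne_zero.2 m.factorial_ne_zero
  rw [← ascPochhammer_smeval_eq_eval, ← Ring.factorial_nsmul_multichoose_eq_ascPochhammer,
    ← Algebra.smul_def, ← Nat.cast_smul_eq_nsmul ℚ, smul_smul, one_div_mul_cancel hm, one_smul]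

/-- Lemma `lemmapoly`: in a commutative `ℚ`-algebra `K`, for `n ≥ 1`,
`k ≥ 0` and `x_1, …, x_n ∈ K` with `S = x_1 + ⋯ + x_n`, the sum over all tuples
`(α_1, …, α_n)` of non-negative integers with `α_1 + ⋯ + α_n = k` of
`∏_i x_i(x_i+1)⋯(x_i+α_i−1)/α_i!` equals `S(S+1)⋯(S+k−1)/k!`. -/
theorem stmt0 (K : Type*) [CommRing K] [Algebra ℚ K] (n k : ℕ) (hn : 1 ≤ n)
    (x : Fin n → K) :
    ∑ α ∈ Finset.Nat.antidiagonalTuple n k,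
      ∏ i : Fin n,
        algebraMap ℚ K (1 / (Nat.factorial (α i) : ℚ)) *
          (ascPochhammer K (α i)).eval (x i)
    = algebraMap ℚ K (1 / (Nat.factorial k : ℚ)) *
        (ascPochhammer K k).eval (∑ i : Fin n, x i) := by
  -- Mathlib derives `BinomialRing K` from this structure.
  let _ : Module ℚ≥0 K := Module.compHom K (algebraMap ℚ≥0 ℚ)
  simpa only [algebraMap_one_div_factorial_mul_ascPochhammer_eval,
    piAntidiag_univ_fin_eq_antidiagonalTuple] using stmt0_general univ x k
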